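/- Let α > 0 be a non-integer real number, let d > 0 and x > 0. Then lim_{t → 0⁺} t^{α/2} · (x/(2√(d t))) · M(−α/2 + 1/2, 3/2, −x²/(4 d t)) = (√π / Γ(α/2 + 1)) · x^α / (2^{α+1} d^{α/2}). -/

import Mathlib

noncomputable def poch (a : ℝ) (s : ℕ) : ℝ := ∏ i ∈ Finset.range s, (a + i)

/-- Kummer's confluent hypergeometric function `M(a,b,z)`,
defined by the everywhere-convergent series `M(a,b,z) = Σ_{s} (a)_s z^s / ((b)_s s!)`. -/
noncomputable def kummerM (a b z : ℝ) : ℝ :=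
  ∑' s : ℕ, poch a s / (poch b s * (Nat.factorial s)) * z ^ s

/-- Tricomi's confluent hypergeometric function
`U(a,b,z) = (1/Γ(a)) ∫_0^∞ e^{−z t} t^{a−1} (1+t)^{b−a−1} dt`. -/
noncomputable def tricomiU (a b z : ℝ) : ℝ :=
  (1 / Real.Gamma a) *
    ∫ t in Set.Ioi (0:ℝ), Real.exp (-z * t) * t ^ (a - 1) * (1 + t) ^ (b - a - 1)

open Filter Topology MeasureTheory Set

lemma poch_succ (a : ℝ) (s : ℕ) : poch a (s+1) = poch a s * (a + s) := by
  simp [poch, Finset.prod_range_succ]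

lemma poch_zero (a : ℝ) : poch a 0 = 1 := by simp [poch]

lemma poch_succ' (a : ℝ) (s : ℕ) : poch a (s+1) = a * poch (a+1) s := by
  simp only [poch, Finset.prod_range_succ']
  rw [mul_comm]
  congr 1
  · simp
  · apply Finset.prod_congr rfl
    intro i _
    push_cast
    ring

lemma poch_pos {a : ℝ} (ha : 0 < a) (s : ℕ) : 0 < poch a s :=
  Finset.prod_pos (fun i _ => by positivity)

lemma vander (n : ℕ) : ∀ (c b : ℝ), 0 < b →
    ∑ k ∈ Finset.range (n+1), (n.choose k : ℝ) * ((-1)^k * (poch c k / poch b k))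
      = poch (b - c) n / poch b n := by
  induction n with
  | zero => intro c b hb; simp [poch_zero]
  | succ n ih =>
    intro c b hb
    have h1 := ih c b hb
    have h2 := ih (c+1) (b+1) (by linarith)
    have e : b + 1 - (c + 1) = b - c := by ring
    rw [e] at h2
    have hb1 := (poch_pos hb n).ne'
    have hb2 := (poch_pos (show 0 < b + 1 by linarith) n).ne'
    have key : ∑ k ∈ Finset.range (n+1+1), ((n+1).choose k : ℝ) * ((-1)^k * (poch c k / poch b k))
        = ∑ k ∈ Finset.range (n+1), (n.choose k : ℝ) * ((-1)^k * (poch c k / poch b k))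
          - c / b * ∑ k ∈ Finset.range (n+1),
            (n.choose k : ℝ) * ((-1)^k * (poch (c+1) k / poch (b+1) k)) := by
      rw [Finset.sum_range_succ', Finset.mul_sum]
      have : ∑ k ∈ Finset.range (n+1), (n.choose k : ℝ) * ((-1)^k * (poch c k / poch b k))
          = ∑ k ∈ Finset.range (n+1),
            (n.choose (k+1) : ℝ) * ((-1)^(k+1) * (poch c (k+1) / poch b (k+1)))
            + 1 := by
        rw [Finset.sum_range_succ' _ n, Finset.sum_range_succ _ n]
        simp [poch_zero]
      rw [this]
      have : ∀ k ∈ Finset.range (n+1),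
          ((n+1).choose (k+1) : ℝ) * ((-1)^(k+1) * (poch c (k+1) / poch b (k+1)))
          = (n.choose (k+1) : ℝ) * ((-1)^(k+1) * (poch c (k+1) / poch b (k+1)))
            - c / b * ((n.choose k : ℝ) * ((-1)^k * (poch (c+1) k / poch (b+1) k))) := by
        intro k _
        rw [Nat.choose_succ_succ]
        have := (poch_pos (show 0 < b + 1 by linarith) k).ne'
        rw [poch_succ' c, poch_succ' b]
        push_cast
        field_simp
        ring
      rw [Finset.sum_congr rfl this, Finset.sum_sub_distrib]
      simp [poch_zero]
      ring
    rw [key, h1, h2]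
    have hbn : b + n ≠ 0 := by positivity
    have e3 : poch (b+1) n = poch b n * (b + n) / b := by
      rw [← poch_succ, poch_succ']; field_simp
    rw [e3, poch_succ, poch_succ]
    field_simp
    ring

lemma summable_term {c : ℝ} (hc : 0 < c) {z : ℝ} (hz : 0 < z) :
    Summable (fun s : ℕ => poch c s / (poch (3/2) s * (Nat.factorial s)) * z ^ s) := by
  have hp := fun s => poch_pos hc s
  have hq := fun s => poch_pos (show (0:ℝ) < 3/2 by norm_num) s
  apply summable_of_ratio_test_tendsto_lt_one (l := 0) (by norm_num)
  · refine Eventually.of_forall (fun s => ?_)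
    have := hp s
    have := hq s
    positivity
  · have e : ∀ s : ℕ, ‖poch c (s+1) / (poch (3/2) (s+1) * (Nat.factorial (s+1))) * z ^ (s+1)‖ /
        ‖poch c s / (poch (3/2) s * (Nat.factorial s)) * z ^ s‖
        = z * (1 / ((s:ℝ) + 1)) * (1 + (c - 3/2) * (1 / ((s:ℝ) + 3/2))) := by
      intro s
      have h1 := hp s
      have h2 := hq s
      have h3 := hp (s+1)
      have h4 := hq (s+1)
      rw [Real.norm_of_nonneg (by positivity), Real.norm_of_nonneg (by positivity)]
      rw [poch_succ, poch_succ, Nat.factorial_succ]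
      have : (3/2 + (s:ℝ)) ≠ 0 := by positivity
      have : ((s:ℝ) + 3/2) ≠ 0 := by positivity
      push_cast
      field_simp
      ring
    simp_rw [e]
    have t1 : Tendsto (fun s : ℕ => 1 / ((s:ℝ) + 1)) atTop (𝓝 0) :=
      tendsto_one_div_add_atTop_nhds_zero_nat
    have t2 : Tendsto (fun s : ℕ => 1 / ((s:ℝ) + 3/2)) atTop (𝓝 0) := by
      simp_rw [one_div]
      exact (tendsto_atTop_add_const_right _ _ tendsto_natCast_atTop_atTop).inv_tendsto_atTop
    simpa using (t1.const_mul z).mul ((t2.const_mul (c-3/2)).const_add 1)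

lemma kummer_transform {c : ℝ} (hc : 0 < c) {z : ℝ} (hz : 0 < z) :
    kummerM (3/2 - c) (3/2) (-z) = Real.exp (-z) * kummerM c (3/2) z := by
  have hs := summable_term hc hz
  have he : Summable (fun n : ℕ => (-z)^n / (n.factorial : ℝ)) := Real.summable_pow_div_factorial _
  have e1 : Real.exp (-z) = ∑' n : ℕ, (-z)^n / (n.factorial : ℝ) := by
    rw [Real.exp_eq_exp_ℝ, NormedSpace.exp_eq_tsum_div]
  rw [mul_comm, e1]
  unfold kummerM
  rw [tsum_mul_tsum_eq_tsum_sum_antidiagonal_of_summable_norm hs.norm he.norm]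
  congr 1
  ext n
  rw [Finset.Nat.sum_antidiagonal_eq_sum_range_succ_mk]
  have v := vander n c (3/2) (by norm_num)
  have : poch (3/2 - c) n / (poch (3/2) n * (Nat.factorial n)) * (-z) ^ n
    = (poch (3/2 - c) n / poch (3/2) n) * ((-z)^n / (Nat.factorial n)) := by
    field_simp
  rw [this, ← v, Finset.sum_mul]
  apply Finset.sum_congr rfl
  intro k hk
  have hk' : k ≤ n := by simpa [Nat.lt_succ_iff] using hk
  rw [Nat.cast_choose ℝ hk']
  have h2 := (poch_pos (show (0:ℝ) < 3/2 by norm_num) k).ne'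
  have h3 : (-z)^n = (-1)^k * z^k * (-z)^(n-k) := by
    rw [← mul_pow, neg_one_mul, ← pow_add]; congr 1; omega
  have h4 : ((-1:ℝ)^k) * (-1)^k = 1 := by rw [← mul_pow]; simp
  rw [h3]
  field_simp
  linear_combination (poch c k * (-z)^(n-k)) * h4

lemma poch_half (s : ℕ) : poch (3/2) s * (s.factorial : ℝ) = ((2*s+1).factorial : ℝ) / 4^s := by
  induction s with
  | zero => simp [poch_zero]
  | succ s ih =>
    have : 2 * (s+1) + 1 = (2*s+1) + 1 + 1 := by ring
    rw [this, Nat.factorial_succ (2*s+1+1), Nat.factorial_succ (2*s+1), Nat.factorial_succ s, poch_succ]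
    push_cast
    rw [pow_succ]
    rw [eq_div_iff (by positivity)] at ih
    rw [eq_div_iff (by positivity), ← ih]
    ring

lemma poch_gamma {c : ℝ} (hc : 0 < c) (s : ℕ) :
    poch c s * Real.Gamma c = Real.Gamma (c + s) := by
  induction s with
  | zero => simp [poch_zero]
  | succ s ih =>
    rw [poch_succ]
    push_cast
    rw [← add_assoc, Real.Gamma_add_one (by positivity), ← ih]
    ring

lemma integral_rep {α : ℝ} (hα : 0 < α) {w : ℝ} (hw : 0 < w) :
    Real.Gamma (α/2+1) * (w * kummerM (α/2+1) (3/2) (w^2))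
      = ∫ v in Ioi (0:ℝ), v^α * Real.exp (-v^(2:ℝ)) * Real.sinh (2*v*w) := by
  set c := α/2+1 with hcdef
  have hc : 0 < c := by positivity
  let F : ℕ → ℝ → ℝ := fun s v =>
    (2 * (4:ℝ)^s * w^(2*s+1) / ((2*s+1).factorial : ℝ)) * (v^(α + 1 + 2*s) * Real.exp (-v^(2:ℝ)))
  have hint : ∀ s, Integrable (F s) (volume.restrict (Ioi 0)) := by
    intro s
    apply Integrable.const_mul
    exact integrableOn_rpow_mul_exp_neg_rpow
      (by have : (0:ℝ) ≤ 2 * s := by positivity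
          linarith) (by norm_num)
  have hval : ∀ s, ∫ v in Ioi (0:ℝ), F s v = Real.Gamma c * w *
      (poch c s / (poch (3/2) s * (Nat.factorial s)) * (w^2) ^ s) := by
    intro s
    simp only [F]
    rw [integral_const_mul, integral_rpow_mul_exp_neg_rpow (by norm_num)
      (by have : (0:ℝ) ≤ 2 * s := by positivity
          linarith)]
    have : (α + 1 + 2 * (s:ℝ) + 1) / 2 = c + s := by rw [hcdef]; ring
    rw [this, ← poch_gamma hc, poch_half]
    field_simp
    ring
  have hnn : ∀ s, ∀ v ∈ Ioi (0:ℝ), 0 ≤ F s v := by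
    intro s v hv
    have : (0:ℝ) < v := hv
    simp only [F]; positivity
  have hnorm : ∀ s, ∫ v in Ioi (0:ℝ), ‖F s v‖ = ∫ v in Ioi (0:ℝ), F s v := by
    intro s
    apply setIntegral_congr_fun measurableSet_Ioi
    intro v hv
    exact Real.norm_of_nonneg (hnn s v hv)
  have hsum : Summable (fun s => ∫ v in Ioi (0:ℝ), ‖F s v‖) := by
    simp_rw [hnorm, hval]
    exact (summable_term hc (by positivity)).mul_left _
  have H := integral_tsum_of_summable_integral_norm hint hsum
  simp_rw [hval] at H
  rw [tsum_mul_left] at H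
  have : kummerM c (3/2) (w^2) = ∑' s : ℕ, poch c s / (poch (3/2) s * (Nat.factorial s)) * (w^2) ^ s := rfl
  rw [← mul_assoc, this, H]
  apply setIntegral_congr_fun measurableSet_Ioi
  intro v hv
  have hv : (0:ℝ) < v := hv
  simp only [F]
  rw [Real.sinh_eq_tsum, ← tsum_mul_left]
  congr 1
  ext s
  have : v^(α + 1 + 2*(s:ℝ)) = v^α * v^(2*s+1) := by
    rw [← Real.rpow_natCast, ← Real.rpow_add hv]
    congr 1
    push_cast
    ring
  rw [this]
  have h4 : (4:ℝ)^s = 2^(2*s) := by rw [pow_mul]; norm_num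
  rw [h4, mul_pow, mul_pow, pow_succ 2 (2*s)]
  ring

noncomputable def gg (α v : ℝ) : ℝ := v * |v|^(α-1)

lemma gg_pos {α v : ℝ} (hv : 0 < v) : gg α v = v^α := by
  unfold gg
  rw [abs_of_pos hv, Real.rpow_sub_one hv.ne']
  field_simp

lemma gg_neg (α v : ℝ) : gg α (-v) = - gg α v := by
  unfold gg; simp

lemma gg_abs (α v : ℝ) : |gg α v| ≤ |v|^α := by
  rcases lt_trichotomy v 0 with h | h | h
  · rw [← abs_neg, ← gg_neg, gg_pos (by linarith), abs_of_neg h, abs_of_nonneg]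
    apply Real.rpow_nonneg; linarith
  · simp only [gg, h, abs_zero, zero_mul]; apply Real.rpow_nonneg; norm_num
  · rw [gg_pos h, abs_of_pos h, abs_of_nonneg (by positivity)]

lemma gg_meas (α : ℝ) : Measurable (gg α) := by
  unfold gg
  fun_prop

lemma bound {α : ℝ} (hα : 0 < α) {w : ℝ} (hw : 0 < w) (u : ℝ) :
    ‖gg α (u + w) * Real.exp (-u^2)‖ ≤
      (w+1)^α * (Real.exp (α^2/2) * Real.exp (-(1/2) * u^2)) := by
  rw [norm_mul, Real.norm_eq_abs, Real.norm_eq_abs, abs_of_pos (Real.exp_pos _)]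
  have h1 : |u + w| ≤ (w + 1) * Real.exp |u| := by
    have := Real.add_one_le_exp |u|
    have h2 := abs_add_le u w
    rw [abs_of_pos hw] at h2
    nlinarith [abs_nonneg u]
  have h2 : |gg α (u+w)| ≤ (w+1)^α * Real.exp (α * |u|) := by
    refine (gg_abs _ _).trans ((Real.rpow_le_rpow (abs_nonneg _) h1 hα.le).trans ?_)
    rw [Real.mul_rpow (by positivity) (by positivity), ← Real.exp_mul, mul_comm |u|]
  have h3 : Real.exp (α * |u|) * Real.exp (-u^2) ≤ Real.exp (α^2/2) * Real.exp (-(1/2) * u^2) := by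
    rw [← Real.exp_add, ← Real.exp_add, Real.exp_le_exp]
    nlinarith [sq_nonneg (α - |u|), sq_abs u]
  calc _ ≤ (w+1)^α * Real.exp (α * |u|) * Real.exp (-u^2) := by gcongr
    _ ≤ _ := by rw [mul_assoc]; gcongr

lemma bound_int (C α : ℝ) :
    Integrable (fun u : ℝ => C * (Real.exp (α^2/2) * Real.exp (-(1/2) * u^2))) :=
  ((integrable_exp_neg_mul_sq (by norm_num : (0:ℝ) < 1/2)).const_mul _).const_mul _

lemma g_int {α : ℝ} (hα : 0 < α) {w : ℝ} (hw : 0 < w) :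
    Integrable (fun u => gg α (u + w) * Real.exp (-u^2)) := by
  refine (bound_int ((w+1)^α) α).mono' ?_ (Eventually.of_forall (bound hα hw))
  have := gg_meas α
  exact Measurable.aestronglyMeasurable (by fun_prop)

lemma full_integral {α : ℝ} (hα : 0 < α) {w : ℝ} (hw : 0 < w) :
    ∫ u, gg α (u + w) * Real.exp (-u^2) =
      2 * Real.exp (-w^2) *
        ∫ v in Ioi (0:ℝ), v^α * Real.exp (-v^(2:ℝ)) * Real.sinh (2*v*w) := by
  let f : ℝ → ℝ := fun v => gg α v * Real.exp (-(v-w)^2)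
  have hf : (fun u => gg α (u + w) * Real.exp (-u^2)) = fun u => f (u + w) := by
    ext u; simp [f]
  have hi : Integrable f := by
    have := (g_int hα hw).comp_sub_right w
    simpa [f] using this
  rw [hf, integral_add_right_eq_self f w, ← intervalIntegral.integral_Iic_add_Ioi (b := 0)
    hi.integrableOn hi.integrableOn]
  have h1 := integral_comp_neg_Ioi (0:ℝ) f
  rw [neg_zero] at h1
  have hi2 : IntegrableOn (fun v => f (-v)) (Ioi 0) := hi.comp_neg.integrableOn
  rw [← h1, ← integral_add hi2 hi.integrableOn, ← integral_const_mul]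
  apply setIntegral_congr_fun measurableSet_Ioi
  intro v hv
  have hv : (0:ℝ) < v := hv
  simp only [f]
  rw [gg_neg, gg_pos hv, Real.sinh_eq]
  have e1 : Real.exp (-(-v-w)^2) = Real.exp (-w^2) * Real.exp (-v^(2:ℝ)) * Real.exp (-(2*v*w)) := by
    rw [← Real.exp_add, ← Real.exp_add, Real.rpow_two]; congr 1; ring
  have e2 : Real.exp (-(v-w)^2) = Real.exp (-w^2) * Real.exp (-v^(2:ℝ)) * Real.exp (2*v*w) := by
    rw [← Real.exp_add, ← Real.exp_add, Real.rpow_two]; congr 1; ring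
  rw [e1, e2]
  ring

lemma main_rep {α : ℝ} (hα : 0 < α) {w : ℝ} (hw : 0 < w) :
    w * kummerM (-α/2+1/2) (3/2) (-w^2) =
      1 / (2 * Real.Gamma (α/2+1)) * ∫ u, gg α (u + w) * Real.exp (-u^2) := by
  have hG : 0 < Real.Gamma (α/2+1) := Real.Gamma_pos_of_pos (by positivity)
  rw [full_integral hα hw, ← integral_rep hα hw]
  have : -α/2+1/2 = 3/2 - (α/2+1) := by ring
  rw [this, kummer_transform (by positivity) (by positivity)]
  field_simp

lemma main_lim {α : ℝ} (hα : 0 < α) :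
    Tendsto (fun w : ℝ => w^(-α) * ∫ u, gg α (u + w) * Real.exp (-u^2)) atTop
      (𝓝 (Real.sqrt Real.pi)) := by
  have hpi : Real.sqrt Real.pi = ∫ u : ℝ, Real.exp (-u^2) := by
    have := integral_gaussian 1
    simp at this
    exact this.symm
  rw [hpi]
  simp_rw [← integral_const_mul]
  apply tendsto_integral_filter_of_dominated_convergence
    (fun u : ℝ => 2^α * (Real.exp (α^2/2) * Real.exp (-(1/2) * u^2)))
  · refine Eventually.of_forall (fun w => ?_)
    have := gg_meas α
    exact Measurable.aestronglyMeasurable (by fun_prop)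
  · filter_upwards [eventually_ge_atTop 1] with w hw
    refine Eventually.of_forall (fun u => ?_)
    have hw0 : 0 < w := by linarith
    rw [norm_mul, Real.norm_of_nonneg (by positivity)]
    refine (mul_le_mul_of_nonneg_left (bound hα hw0 u) (by positivity)).trans ?_
    rw [← mul_assoc]
    apply mul_le_mul_of_nonneg_right _ (by positivity)
    rw [Real.rpow_neg hw0.le, inv_mul_le_iff₀ (by positivity), ← Real.mul_rpow hw0.le (by norm_num)]
    exact Real.rpow_le_rpow (by positivity) (by linarith) hα.le
  · exact bound_int _ _
  · refine Eventually.of_forall (fun u => ?_)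
    have t : Tendsto (fun w : ℝ => (1 + u * w⁻¹)^α * Real.exp (-u^2)) atTop
        (𝓝 (Real.exp (-u^2))) := by
      have t1 : Tendsto (fun w : ℝ => 1 + u * w⁻¹) atTop (𝓝 1) := by
        simpa using (tendsto_inv_atTop_zero.const_mul u).const_add (1:ℝ)
      have := (t1.rpow_const (p := α) (Or.inl one_ne_zero)).mul_const (Real.exp (-u^2))
      simpa using this
    refine t.congr' ?_
    filter_upwards [eventually_gt_atTop 0, eventually_gt_atTop (-u)] with w h0 h1
    have h2 : 0 < u + w := by linarith
    rw [gg_pos h2, Real.rpow_neg h0.le, ← mul_assoc, ← Real.inv_rpow h0.le,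
      ← Real.mul_rpow (by positivity) h2.le]
    congr 2
    field_simp
    ring

/-- for non-integer `α > 0`, `d > 0`, `x > 0`,
`lim_{t→0⁺} t^{α/2} (x/(2√(dt))) M(−α/2+1/2, 3/2, −x²/(4dt))
  = (√π/Γ(α/2+1)) · x^α/(2^{α+1} d^{α/2})`. -/
theorem statement_13 (α d x : ℝ) (hα : 0 < α) (hαnotint : ∀ n : ℤ, α ≠ n)
    (hd : 0 < d) (hx : 0 < x) :
    Filter.Tendsto
      (fun t : ℝ => t ^ (α / 2) * (x / (2 * Real.sqrt (d * t))) *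
        kummerM (-α / 2 + 1 / 2) (3 / 2) (-x ^ 2 / (4 * d * t)))
      (nhdsWithin 0 (Set.Ioi 0))
      (nhds (Real.sqrt Real.pi / Real.Gamma (α / 2 + 1) *
        (x ^ α / ((2:ℝ) ^ (α + 1) * d ^ (α / 2))))) := by
  have hG : 0 < Real.Gamma (α/2+1) := Real.Gamma_pos_of_pos (by positivity)
  have hw : Tendsto (fun t : ℝ => x / (2 * Real.sqrt (d * t))) (𝓝[>] 0) atTop := by
    simp_rw [div_eq_mul_inv]
    apply Tendsto.const_mul_atTop hx
    apply Tendsto.inv_tendsto_nhdsGT_zero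
    apply tendsto_nhdsWithin_of_tendsto_nhds_of_eventually_within
    · have : Continuous (fun t : ℝ => 2 * Real.sqrt (d * t)) := by fun_prop
      have := this.tendsto 0
      simp only [mul_zero, Real.sqrt_zero] at this
      exact this.mono_left nhdsWithin_le_nhds
    · filter_upwards [self_mem_nhdsWithin] with t ht
      have : (0:ℝ) < t := ht
      simp only [mem_Ioi]; positivity
  have key := ((main_lim hα).comp hw).const_mul
    (x ^ α / ((2:ℝ) ^ α * d ^ (α / 2)) * (1 / (2 * Real.Gamma (α/2+1))))
  have e : x ^ α / ((2:ℝ) ^ α * d ^ (α / 2)) * (1 / (2 * Real.Gamma (α/2+1))) * Real.sqrt Real.pi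
      = Real.sqrt Real.pi / Real.Gamma (α / 2 + 1) *
        (x ^ α / ((2:ℝ) ^ (α + 1) * d ^ (α / 2))) := by
    rw [Real.rpow_add_one (by norm_num)]
    field_simp
  rw [e] at key
  refine key.congr' ?_
  filter_upwards [self_mem_nhdsWithin] with t ht
  have ht : (0:ℝ) < t := ht
  have hs : 0 < Real.sqrt (d * t) := by positivity
  have hz : -x ^ 2 / (4 * d * t) = -(x / (2 * Real.sqrt (d * t)))^2 := by
    rw [div_pow, mul_pow, Real.sq_sqrt (by positivity)]
    ring
  rw [hz, mul_assoc (t ^ (α/2)), main_rep hα (by positivity)]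
  simp only [Function.comp]
  have hp : (x / (2 * Real.sqrt (d * t)))^(-α) = 2^α * d^(α/2) * t^(α/2) / x^α := by
    rw [Real.rpow_neg (by positivity), Real.div_rpow hx.le (by positivity), inv_div,
      Real.mul_rpow (by norm_num) hs.le, Real.sqrt_eq_rpow, ← Real.rpow_mul (by positivity),
      Real.mul_rpow hd.le ht.le]
    have : 1/2 * α = α/2 := by ring
    rw [this]
    ring
  rw [hp]
  generalize (∫ (u : ℝ), gg α (u + x / (2 * Real.sqrt (d * t))) * Real.exp (-u ^ 2)) = I
  field_simp
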